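/- For every λ with 0 < λ ≤ 1/2, ∫_{1−2λ}^1 k K(k) / (√(1−k²) √(k² − (1−2λ)²)) dk = K(√λ) K(√(1−λ)) = ∫_{(1−λ)/(1+λ)}^1 K(k) / (√(1−k²) √((1+λ)² k² − (1−λ)²)) dk. -/

import Mathlib

open Real MeasureTheory intervalIntegral Filter Topology

/-- Complete elliptic integral of the first kind. -/
noncomputable def ellipticK (k : ℝ) : ℝ :=
  ∫ θ in (0:ℝ)..(π/2), 1 / Real.sqrt (1 - k^2 * Real.sin θ ^ 2)

/-- Change of variables with explicit inverse. -/
lemma cov_inv {S T : Set ℝ} (hS : MeasurableSet S) (f finv f' : ℝ → ℝ)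
    (h1 : ∀ x ∈ S, f x ∈ T) (h2 : ∀ y ∈ T, finv y ∈ S)
    (h3 : ∀ x ∈ S, finv (f x) = x) (h4 : ∀ y ∈ T, f (finv y) = y)
    (hd : ∀ x ∈ S, HasDerivAt f (f' x) x) (g : ℝ → ENNReal) :
    ∫⁻ y in T, g y = ∫⁻ x in S, ENNReal.ofReal |f' x| * g (f x) := by
  have hT : T = f '' S := by
    ext y; constructor
    · intro hy; exact ⟨finv y, h2 y hy, h4 y hy⟩
    · rintro ⟨x, hx, rfl⟩; exact h1 x hx
  have hinj : Set.InjOn f S := by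
    intro x hx y hy hxy
    rw [← h3 x hx, ← h3 y hy, hxy]
  rw [hT, lintegral_image_eq_lintegral_abs_deriv_mul hS
    (fun x hx => (hd x hx).hasDerivWithinAt) hinj]

lemma cov_pos {a b : ℝ} (hab : a < b) (f f' : ℝ → ℝ) (hc : ContinuousOn f (Set.Icc a b))
    (hd : ∀ x ∈ Set.Ioo a b, HasDerivAt f (f' x) x) (hp : ∀ x ∈ Set.Ioo a b, 0 < f' x)
    {c d : ℝ} (hca : f a = c) (hdb : f b = d)
    (g : ℝ → ENNReal) :
    ∫⁻ y in Set.Ioo c d, g y = ∫⁻ x in Set.Ioo a b, ENNReal.ofReal (f' x) * g (f x) := by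
  subst hca hdb
  have hm : StrictMonoOn f (Set.Icc a b) := by
    apply strictMonoOn_of_deriv_pos (convex_Icc a b) hc
    intro x hx
    rw [interior_Icc] at hx
    rw [(hd x hx).deriv]; exact hp x hx
  have hT : Set.Ioo (f a) (f b) = f '' Set.Ioo a b := by
    apply Set.Subset.antisymm (intermediate_value_Ioo hab.le hc)
    rintro _ ⟨x, hx, rfl⟩
    exact ⟨hm (Set.left_mem_Icc.2 hab.le) (Set.Ioo_subset_Icc_self hx) hx.1,
      hm (Set.Ioo_subset_Icc_self hx) (Set.right_mem_Icc.2 hab.le) hx.2⟩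
  rw [hT, lintegral_image_eq_lintegral_abs_deriv_mul measurableSet_Ioo
    (fun x hx => (hd x hx).hasDerivWithinAt) (hm.injOn.mono Set.Ioo_subset_Icc_self)]
  apply setLIntegral_congr_fun measurableSet_Ioo
  intro x hx
  simp only [abs_of_pos (hp x hx)]

lemma cov_neg {a b : ℝ} (hab : a < b) (f f' : ℝ → ℝ) (hc : ContinuousOn f (Set.Icc a b))
    (hd : ∀ x ∈ Set.Ioo a b, HasDerivAt f (-f' x) x) (hp : ∀ x ∈ Set.Ioo a b, 0 < f' x)
    {c d : ℝ} (hca : f a = d) (hdb : f b = c)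
    (g : ℝ → ENNReal) :
    ∫⁻ y in Set.Ioo c d, g y = ∫⁻ x in Set.Ioo a b, ENNReal.ofReal (f' x) * g (f x) := by
  subst hca hdb
  have hm : StrictAntiOn f (Set.Icc a b) := by
    apply strictAntiOn_of_deriv_neg (convex_Icc a b) hc
    intro x hx
    rw [interior_Icc] at hx
    rw [(hd x hx).deriv]; linarith [hp x hx]
  have hT : Set.Ioo (f b) (f a) = f '' Set.Ioo a b := by
    apply Set.Subset.antisymm (intermediate_value_Ioo' hab.le hc)
    rintro _ ⟨x, hx, rfl⟩
    exact ⟨hm (Set.Ioo_subset_Icc_self hx) (Set.right_mem_Icc.2 hab.le) hx.2,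
      hm (Set.left_mem_Icc.2 hab.le) (Set.Ioo_subset_Icc_self hx) hx.1⟩
  rw [hT, lintegral_image_eq_lintegral_abs_deriv_mul measurableSet_Ioo
    (fun x hx => (hd x hx).hasDerivWithinAt) (hm.injOn.mono Set.Ioo_subset_Icc_self)]
  apply setLIntegral_congr_fun measurableSet_Ioo
  intro x hx
  simp only [abs_neg, abs_of_pos (hp x hx)]

lemma sqrt_key {d A B : ℝ} (hd : 0 < d) (_hA : 0 < A) (hB : 0 < B) (h : d ^ 2 * B = A) :
    d * (1 / √A) = 1 / √B := by
  rw [← h, Real.sqrt_mul (by positivity), Real.sqrt_sq hd.le]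
  have := Real.sqrt_pos.2 hB
  field_simp

/-- lintegral version of K as function of the parameter m = k^2. -/
noncomputable def LK (m : ℝ) : ENNReal :=
  ∫⁻ θ in Set.Ioo 0 (π/2), ENNReal.ofReal (1 / √(1 - m * Real.sin θ ^ 2))

lemma one_sub_pos {m p : ℝ} (hm : m < 1) (hp : 0 ≤ p) (hp1 : p ≤ 1) : 0 < 1 - m * p := by
  by_cases h : m ≤ 0
  · nlinarith [mul_nonneg (neg_nonneg.2 h) hp]
  · push Not at h
    nlinarith

lemma LK_X {m : ℝ} (hm : m < 1) :
    LK m = ∫⁻ x in Set.Ioo (0:ℝ) 1, ENNReal.ofReal (1 / √((1 - x^2) * (1 - m * x^2))) := by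
  have := cov_pos (a := 0) (b := π/2) (by positivity) Real.sin Real.cos
    Real.continuous_sin.continuousOn (fun x _ => Real.hasDerivAt_sin x)
    (fun x hx => Real.cos_pos_of_mem_Ioo ⟨by linarith [hx.1, Real.pi_pos], hx.2⟩)
    (c := 0) (d := 1) (by simp) (by simp)
    (fun x => ENNReal.ofReal (1 / √((1 - x^2) * (1 - m * x^2))))
  rw [this, LK]
  apply setLIntegral_congr_fun measurableSet_Ioo
  intro x hx
  have hc : 0 < Real.cos x := Real.cos_pos_of_mem_Ioo ⟨by linarith [hx.1, Real.pi_pos], hx.2⟩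
  have h2 : 0 < 1 - m * Real.sin x ^ 2 := one_sub_pos hm (sq_nonneg _) (Real.sin_sq_le_one x)
  have h3 : 1 - Real.sin x ^ 2 = Real.cos x ^ 2 := by rw [Real.cos_sq']
  simp only
  rw [← ENNReal.ofReal_mul hc.le, sqrt_key hc _ h2]
  · rw [h3]
  · rw [h3]; positivity

lemma LK_P {m : ℝ} (hm : m < 1) :
    LK m = ∫⁻ p in Set.Ioo (0:ℝ) 1, ENNReal.ofReal (1 / √(4 * (p * (1 - p) * (1 - m * p)))) := by
  have := cov_pos (a := 0) (b := 1) (by positivity) (fun x => x^2) (fun x => 2 * x)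
    (by fun_prop) (fun x _ => by simpa using hasDerivAt_pow 2 x)
    (fun x hx => by have := hx.1; linarith)
    (c := 0) (d := 1) (by simp) (by simp)
    (fun p => ENNReal.ofReal (1 / √(4 * (p * (1 - p) * (1 - m * p)))))
  rw [this, LK_X hm]
  apply setLIntegral_congr_fun measurableSet_Ioo
  intro x hx
  have hx0 := hx.1
  have hx1 := hx.2
  have h2 : 0 < 1 - m * x ^ 2 := one_sub_pos hm (sq_nonneg _) (by nlinarith)
  have h3 : 0 < 1 - x^2 := by nlinarith
  simp only
  rw [← ENNReal.ofReal_mul (by positivity), sqrt_key]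
  all_goals first | positivity | ring

lemma LK_ofReal {k : ℝ} (hk0 : 0 ≤ k) (hk : k < 1) : ENNReal.ofReal (ellipticK k) = LK (k^2) := by
  have hpi := Real.pi_pos
  have hpos : ∀ θ, 0 < 1 - k^2 * Real.sin θ ^ 2 := fun θ =>
    one_sub_pos (by nlinarith) (sq_nonneg _) (Real.sin_sq_le_one θ)
  have hcont : Continuous (fun θ => 1 / √(1 - k^2 * Real.sin θ ^ 2)) := by
    apply Continuous.div (by fun_prop) (by fun_prop)
    intro θ; exact (Real.sqrt_pos.2 (hpos θ)).ne'
  rw [ellipticK, intervalIntegral.integral_of_le (by positivity), integral_Ioc_eq_integral_Ioo, LK,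
    ofReal_integral_eq_lintegral_ofReal]
  · have := (hcont.integrableOn_Icc (a := 0) (b := π/2) (μ := volume))
    exact this.mono_set Set.Ioo_subset_Icc_self
  · filter_upwards with θ; positivity

lemma ellipticK_nonneg (k : ℝ) : 0 ≤ ellipticK k := by
  rw [ellipticK]
  apply intervalIntegral.integral_nonneg (by positivity)
  intro θ _; positivity

lemma ellipticK_meas : Measurable ellipticK := by
  have h : StronglyMeasurable (fun k : ℝ => ∫ θ in Set.Ioc 0 (π/2), 1 / √(1 - k^2 * Real.sin θ ^ 2)) := by
    apply StronglyMeasurable.integral_prod_right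
      (f := fun k θ : ℝ => 1 / √(1 - k^2 * Real.sin θ ^ 2))
    apply Measurable.stronglyMeasurable
    simp only [Function.uncurry_def]
    fun_prop
  have h2 : ellipticK = (fun k : ℝ => ∫ θ in Set.Ioc 0 (π/2), 1 / √(1 - k^2 * Real.sin θ ^ 2)) := by
    funext k
    rw [ellipticK, intervalIntegral.integral_of_le (by positivity)]
  rw [h2]; exact h.measurable

/-- Landen -/
lemma LK_landen {l : ℝ} (h0 : 0 < l) (h1 : l < 1) :
    LK (4 * l / (1 + l)^2) = ENNReal.ofReal (1 + l) * LK (l^2) := by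
  have hm : 4 * l / (1 + l)^2 < 1 := by
    rw [div_lt_one (by positivity)]; nlinarith [mul_pos (sub_pos.2 h1) (sub_pos.2 h1)]
  rw [LK_X hm, LK_X (by nlinarith : l^2 < 1)]
  have := cov_pos (a := 0) (b := 1) (by positivity) (fun x => (1 + l) * x / (1 + l * x^2))
    (fun x => (1 + l) * (1 - l * x^2) / (1 + l * x^2)^2)
    (by
      apply ContinuousOn.div (by fun_prop) (by fun_prop)
      intro x _; positivity)
    (fun x _ => by
      have hne : 1 + l * x^2 ≠ 0 := by positivity
      have hn : HasDerivAt (fun x : ℝ => (1 + l) * x) (1 + l) x := by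
        simpa using (hasDerivAt_id x).const_mul (1 + l)
      have hd : HasDerivAt (fun x : ℝ => 1 + l * x^2) (l * (2 * x)) x := by
        simpa using ((hasDerivAt_pow 2 x).const_mul l).const_add 1
      refine (hn.div hd hne).congr_deriv ?_
      field_simp; ring)
    (fun x hx => by
      have := hx.1; have := hx.2
      have : 0 < 1 - l * x^2 := one_sub_pos h1 (sq_nonneg _) (by nlinarith)
      positivity)
    (c := 0) (d := 1) (by simp) (by
      show (1 + l) * 1 / (1 + l * 1^2) = 1
      rw [div_eq_one_iff_eq (by positivity)]; ring)
    (fun x => ENNReal.ofReal (1 / √((1 - x^2) * (1 - 4 * l / (1 + l)^2 * x^2))))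
  rw [this, ← lintegral_const_mul' _ _ ENNReal.ofReal_ne_top]
  apply setLIntegral_congr_fun measurableSet_Ioo
  intro x hx
  have hx0 := hx.1
  have hx1 := hx.2
  have h2 : 0 < 1 - l * x ^ 2 := one_sub_pos h1 (sq_nonneg _) (by nlinarith)
  have h3 : 0 < 1 - l^2 * x ^ 2 := one_sub_pos (by nlinarith) (sq_nonneg _) (by nlinarith)
  have h4 : 0 < 1 - x^2 := by nlinarith
  simp only
  rw [← ENNReal.ofReal_mul (by positivity), ← ENNReal.ofReal_mul (by positivity)]
  congr 1
  have e1 : (1 - ((1 + l) * x / (1 + l * x ^ 2)) ^ 2) = (1 - x^2) * (1 - l^2 * x^2) / (1 + l * x^2)^2 := by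
    field_simp; ring
  have e2 : (1 - 4 * l / (1 + l) ^ 2 * ((1 + l) * x / (1 + l * x ^ 2)) ^ 2)
      = (1 - l * x^2)^2 / (1 + l * x^2)^2 := by
    field_simp; ring
  rw [e1, e2]
  have := sqrt_key (d := (1 - l * x ^ 2) / (1 + l * x ^ 2) ^ 2)
    (A := (1 - x ^ 2) * (1 - l ^ 2 * x ^ 2) / (1 + l * x ^ 2) ^ 2 * ((1 - l * x ^ 2) ^ 2 / (1 + l * x ^ 2) ^ 2))
    (B := (1 - x ^ 2) * (1 - l ^ 2 * x ^ 2)) (by positivity) (by positivity) (by positivity)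
    (by field_simp)
  rw [← this]; ring

lemma sqrt_key2 {d A B E : ℝ} (hd : 0 < d) (hA : 0 < A) (hB : 0 < B) (hE : 0 < E)
    (h : d ^ 2 * B = A * E) :
    1 / √E * (d * (1 / √A)) = 1 / √B := by
  rw [← sqrt_key hd (mul_pos hA hE) hB h, Real.sqrt_mul hA.le]
  have := Real.sqrt_pos.2 hE
  have := Real.sqrt_pos.2 hA
  field_simp

/-- the integrand after the first step -/
noncomputable def F1 (m q x : ℝ) : ENNReal :=
  ENNReal.ofReal (1 / √(4 * ((1 - x^2) * (1 - q) * ((1 - (1-2*m)*x)*q - (1-x))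
    * (2*(1-m)*q*x + 1 - x))))

lemma step1 {m q : ℝ} (hm0 : 0 < m) (hm1 : m < 1) (hq0 : 0 < q) (hq1 : q < 1) :
    ENNReal.ofReal (1 / √(4 * (q * (1 - q) * (1 - (1-m) * q)))) * LK m =
      ∫⁻ x in Set.Ioo ((1-q)/(1-(1-2*m)*q)) 1, F1 m q x := by
  have hE : 0 < 1 - (1-m)*q := one_sub_pos (by linarith) hq0.le hq1.le
  have hE2 : 0 < 1 - (1-2*m)*q := one_sub_pos (by linarith) hq0.le hq1.le
  have hx00 : 0 < (1-q)/(1-(1-2*m)*q) := div_pos (by linarith) hE2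
  have hx01 : (1-q)/(1-(1-2*m)*q) < 1 := by
    rw [div_lt_one hE2]; nlinarith [mul_pos hm0 hq0]
  rw [LK_P hm1]
  have := cov_pos (a := (1-q)/(1-(1-2*m)*q)) (b := 1) hx01
    (fun x => ((1 - (1-2*m)*x)*q - (1-x)) / (m*q*(1+x)))
    (fun x => 2 * (1 - (1-m)*q) / (m*q*(1+x)^2))
    (by
      apply ContinuousOn.div (by fun_prop) (by fun_prop)
      intro x hx
      have : 0 < x := hx00.trans_le hx.1
      positivity)
    (fun x hx => by
      have : 0 < x := hx00.trans hx.1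
      have hn : HasDerivAt (fun x : ℝ => ((1 - (1-2*m)*x)*q - (1-x))) (-(1-2*m)*q+1) x := by
        have h1 : HasDerivAt (fun x : ℝ => (1 - (1-2*m)*x)) (-((1-2*m)*1)) x :=
          ((hasDerivAt_id x).const_mul (1-2*m)).const_sub 1
        have h2 : HasDerivAt (fun x : ℝ => 1 - x) (-1) x := (hasDerivAt_id x).const_sub 1
        exact ((h1.mul_const q).sub h2).congr_deriv (by ring)
      have hd : HasDerivAt (fun x : ℝ => m*q*(1+x)) (m*q*1) x :=
        ((hasDerivAt_id x).const_add 1).const_mul (m*q)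
      refine (hn.div hd (by positivity)).congr_deriv ?_
      field_simp; ring)
    (fun x hx => by
      have : 0 < x := hx00.trans hx.1
      positivity)
    (c := 0) (d := 1)
    (by
      have : (1 - (1-2*m)*((1-q)/(1-(1-2*m)*q)))*q - (1-((1-q)/(1-(1-2*m)*q))) = 0 := by
        have := hE2.ne'
        field_simp; ring
      simp only [this, zero_div])
    (by
      show ((1 - (1-2*m)*1)*q - (1-1)) / (m*q*(1+1)) = 1
      rw [div_eq_one_iff_eq (by positivity)]; ring)
    (fun p => ENNReal.ofReal (1 / √(4 * (p * (1 - p) * (1 - m * p)))))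
  rw [this, ← lintegral_const_mul' _ _ ENNReal.ofReal_ne_top]
  apply setLIntegral_congr_fun measurableSet_Ioo
  intro x hx
  have hx0 : 0 < x := hx00.trans hx.1
  have hx1 := hx.2
  have hN : 0 < (1 - (1-2*m)*x)*q - (1-x) := by
    have := hx.1
    rw [div_lt_iff₀ hE2] at this
    linarith
  simp only [F1]
  rw [← ENNReal.ofReal_mul (by positivity), ← ENNReal.ofReal_mul (by positivity)]
  congr 1
  set N := (1 - (1-2*m)*x)*q - (1-x) with hNdef
  have e1 : 1 - N / (m*q*(1+x)) = (1-x)*(1-(1-m)*q)/(m*q*(1+x)) := by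
    rw [hNdef]; field_simp; ring
  have e2 : 1 - m * (N / (m*q*(1+x))) = (2*(1-m)*q*x + 1 - x) / (q*(1+x)) := by
    rw [hNdef]; field_simp; ring
  have hM : 0 < 2*(1-m)*q*x + 1 - x := by
    have := mul_pos (mul_pos (sub_pos.2 hm1) hq0) hx0
    nlinarith
  have hx2 : 0 < 1 - x := by linarith
  have hq2 : 0 < 1 - q := by linarith
  have hxx : 0 < 1 - x^2 := by nlinarith
  rw [e1, e2]
  apply sqrt_key2
  · positivity
  · positivity
  · positivity
  · positivity
  · rw [show 1 - x^2 = (1-x)*(1+x) by ring]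
    generalize 1 - x = X at *
    generalize (1 - (1-m)*q) = Y at *
    generalize 1 - q = Q at *
    generalize 2*(1-m)*q*x + 1 - x = Z at *
    field_simp; norm_num

lemma region_swap {m : ℝ} (hm0 : 0 < m) (F : ℝ → ℝ → ENNReal)
    (hF : Measurable (Function.uncurry F)) :
    ∫⁻ q in Set.Ioo (0:ℝ) 1, ∫⁻ x in Set.Ioo ((1-q)/(1-(1-2*m)*q)) 1, F q x =
    ∫⁻ x in Set.Ioo (0:ℝ) 1, ∫⁻ q in Set.Ioo ((1-x)/(1-(1-2*m)*x)) 1, F q x := by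
  have key : ∀ q ∈ Set.Ioo (0:ℝ) 1, Set.Ioo ((1-q)/(1-(1-2*m)*q)) 1 =
      {x | 1 - x - q + (1-2*m)*q*x < 0} ∩ Set.Ioo 0 1 := by
    rintro q ⟨hq0, hq1⟩
    have hE2 : 0 < 1 - (1-2*m)*q := one_sub_pos (by linarith) hq0.le hq1.le
    ext x
    simp only [Set.mem_Ioo, Set.mem_inter_iff, Set.mem_ofPred_eq]
    rw [div_lt_iff₀ hE2]
    constructor
    · rintro ⟨h1, h2⟩
      refine ⟨by linarith, ?_, h2⟩
      by_contra h
      push Not at h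
      nlinarith [mul_nonneg (neg_nonneg.2 h) hE2.le]
    · rintro ⟨h1, h2, h3⟩
      exact ⟨by linarith, h3⟩
  have hms : MeasurableSet {z : ℝ × ℝ | 1 - z.2 - z.1 + (1-2*m)*z.1*z.2 < 0} :=
    measurableSet_lt (by fun_prop) (by fun_prop)
  have hm1 : ∀ q, MeasurableSet {x : ℝ | 1 - x - q + (1-2*m)*q*x < 0} := fun q =>
    measurableSet_lt (by fun_prop) (by fun_prop)
  have hm2 : ∀ x, MeasurableSet {q : ℝ | 1 - x - q + (1-2*m)*q*x < 0} := fun q =>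
    measurableSet_lt (by fun_prop) (by fun_prop)
  set R := {z : ℝ × ℝ | 1 - z.2 - z.1 + (1-2*m)*z.1*z.2 < 0} with hR
  calc _ = ∫⁻ q in Set.Ioo (0:ℝ) 1, ∫⁻ x in Set.Ioo (0:ℝ) 1, R.indicator (Function.uncurry F) (q, x) := by
        apply setLIntegral_congr_fun measurableSet_Ioo
        intro q hq
        simp only
        rw [key q hq, ← setLIntegral_indicator (hm1 q)]
        rfl
    _ = ∫⁻ x in Set.Ioo (0:ℝ) 1, ∫⁻ q in Set.Ioo (0:ℝ) 1, R.indicator (Function.uncurry F) (q, x) := by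
        apply lintegral_lintegral_swap
        exact (hF.indicator hms).aemeasurable
    _ = _ := by
        apply setLIntegral_congr_fun measurableSet_Ioo
        intro x hx
        simp only
        have : Set.Ioo ((1-x)/(1-(1-2*m)*x)) 1 = {q | 1 - x - q + (1-2*m)*q*x < 0} ∩ Set.Ioo 0 1 := by
          rw [key x hx]
          ext q
          simp only [Set.mem_inter_iff, Set.mem_ofPred_eq]
          rw [show 1 - q - x + (1-2*m)*x*q = 1 - x - q + (1-2*m)*q*x by ring]
        rw [this, ← setLIntegral_indicator (hm2 x)]
        rfl

lemma F1_meas (m : ℝ) : Measurable (Function.uncurry (F1 m)) := by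
  simp only [F1, Function.uncurry_def]
  fun_prop

lemma step3 {m x : ℝ} (hm0 : 0 < m) (hm1 : m < 1) (hx0 : 0 < x) (hx1 : x < 1) :
    ∫⁻ q in Set.Ioo ((1-x)/(1-(1-2*m)*x)) 1, F1 m q x =
    ∫⁻ s in Set.Ioo (0:ℝ) 1, ENNReal.ofReal (1 / √(4*(s*(1-s)))) *
      ENNReal.ofReal (1 / √((1-x^2) * (1 - ((1-2*m)^2 + (1-(1-2*m)^2)*s)*x^2))) := by
  have hE2 : 0 < 1 - (1-2*m)*x := one_sub_pos (by linarith) hx0.le hx1.le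
  have hE3 : 0 < 1 - x*(1-2*m) := by linarith
  have := cov_neg (a := 0) (b := 1) (by norm_num)
    (fun s => 1 - 2*m*x/(1-(1-2*m)*x)*s)
    (fun s => 2*m*x/(1-(1-2*m)*x))
    (by fun_prop)
    (fun s hs => by
      exact (((hasDerivAt_id s).const_mul (2*m*x/(1-(1-2*m)*x))).const_sub 1).congr_deriv (by ring))
    (fun s hs => by positivity)
    (c := (1-x)/(1-(1-2*m)*x)) (d := 1)
    (by simp)
    (by
      field_simp; ring)
    (fun q => F1 m q x)
  rw [this]
  apply setLIntegral_congr_fun measurableSet_Ioo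
  intro s hs
  have hs0 := hs.1
  have hs1 := hs.2
  have hs2 : 0 < 1 - s := by linarith
  have hx2 : 0 < 1 - x := by linarith
  have hxx : 0 < 1 - x^2 := by nlinarith
  have he : 0 < 1 - ((1-2*m)^2 + (1-(1-2*m)^2)*s)*x^2 := by
    apply one_sub_pos _ (sq_nonneg _) (by nlinarith)
    nlinarith [mul_pos (mul_pos hm0 (sub_pos.2 hm1)) hs2]
  simp only [F1]
  rw [← ENNReal.ofReal_mul (by positivity), ← ENNReal.ofReal_mul (by positivity)]
  congr 1
  have e1 : 1 - (1 - 2*m*x/(1-(1-2*m)*x)*s) = 2*m*x*s/(1-(1-2*m)*x) := by ring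
  have e2 : (1 - (1-2*m)*x)*(1 - 2*m*x/(1-(1-2*m)*x)*s) - (1-x) = 2*m*x*(1-s) := by
    field_simp; ring
  have e3 : 2*(1-m)*(1 - 2*m*x/(1-(1-2*m)*x)*s)*x + 1 - x =
      (1 - ((1-2*m)^2 + (1-(1-2*m)^2)*s)*x^2) / (1-(1-2*m)*x) := by
    have h : 2*m*x/(1-(1-2*m)*x)*s*(1-(1-2*m)*x) = 2*m*x*s := by field_simp
    rw [eq_div_iff hE2.ne']
    linear_combination (-(2*(1-m)*x))*h
  rw [e1, e2, e3]
  rw [sqrt_key (B := (4*(s*(1-s))) * ((1-x^2) * (1 - ((1-2*m)^2 + (1-(1-2*m)^2)*s)*x^2)))]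
  · rw [Real.sqrt_mul (by positivity), one_div_mul_one_div]
  · positivity
  · positivity
  · positivity
  · field_simp

lemma ident1 {m : ℝ} (hm0 : 0 < m) (hm1 : m < 1) :
    LK m * LK (1-m) = ∫⁻ s in Set.Ioo (0:ℝ) 1, ENNReal.ofReal (1 / √(4*(s*(1-s)))) *
      LK ((1-2*m)^2 + (1-(1-2*m)^2)*s) := by
  rw [LK_P (m := 1-m) (by linarith), ← lintegral_const_mul _ (by fun_prop)]
  calc _ = ∫⁻ q in Set.Ioo (0:ℝ) 1, ∫⁻ x in Set.Ioo ((1-q)/(1-(1-2*m)*q)) 1, F1 m q x := by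
        apply setLIntegral_congr_fun measurableSet_Ioo
        intro q hq
        simp only
        rw [← step1 hm0 hm1 hq.1 hq.2, mul_comm]
    _ = ∫⁻ x in Set.Ioo (0:ℝ) 1, ∫⁻ q in Set.Ioo ((1-x)/(1-(1-2*m)*x)) 1, F1 m q x :=
        region_swap hm0 _ (F1_meas m)
    _ = ∫⁻ x in Set.Ioo (0:ℝ) 1, ∫⁻ s in Set.Ioo (0:ℝ) 1, ENNReal.ofReal (1 / √(4*(s*(1-s)))) *
      ENNReal.ofReal (1 / √((1-x^2) * (1 - ((1-2*m)^2 + (1-(1-2*m)^2)*s)*x^2))) := by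
        apply setLIntegral_congr_fun measurableSet_Ioo
        intro x hx
        exact step3 hm0 hm1 hx.1 hx.2
    _ = ∫⁻ s in Set.Ioo (0:ℝ) 1, ∫⁻ x in Set.Ioo (0:ℝ) 1, ENNReal.ofReal (1 / √(4*(s*(1-s)))) *
      ENNReal.ofReal (1 / √((1-x^2) * (1 - ((1-2*m)^2 + (1-(1-2*m)^2)*s)*x^2))) := by
        apply lintegral_lintegral_swap
        simp only [Function.uncurry_def]
        fun_prop
    _ = _ := by
        apply setLIntegral_congr_fun measurableSet_Ioo
        intro s hs
        simp only
        have hs2 : 0 < 1 - s := by linarith [hs.2]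
        rw [LK_X (by nlinarith [mul_pos (mul_pos hm0 (sub_pos.2 hm1)) hs2]),
          lintegral_const_mul' _ _ ENNReal.ofReal_ne_top]

lemma ident1' {m : ℝ} (hm0 : 0 < m) (hm1 : m ≤ 1/2) :
    LK m * LK (1-m) = ∫⁻ k in Set.Ioo (1-2*m) 1,
      ENNReal.ofReal (k / (√(1-k^2) * √(k^2-(1-2*m)^2))) * LK (k^2) := by
  have hb : 0 < 1 - (1-2*m)^2 := by nlinarith
  rw [ident1 hm0 (by linarith)]
  have := cov_pos (a := 1-2*m) (b := 1) (by linarith)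
    (fun k => (k^2 - (1-2*m)^2)/(1-(1-2*m)^2))
    (fun k => 2*k/(1-(1-2*m)^2))
    (by fun_prop)
    (fun k hk => by
      have : HasDerivAt (fun k : ℝ => k^2 - (1-2*m)^2) (2*k) k := by
        simpa using (hasDerivAt_pow 2 k).sub_const ((1-2*m)^2)
      exact this.div_const _)
    (fun k hk => by have : 0 < k := by linarith [hk.1]
                    positivity)
    (c := 0) (d := 1)
    (by simp)
    (by
      simp only [one_pow]
      exact div_self hb.ne')
    (fun s => ENNReal.ofReal (1 / √(4*(s*(1-s)))) * LK ((1-2*m)^2 + (1-(1-2*m)^2)*s))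
  rw [this]
  apply setLIntegral_congr_fun measurableSet_Ioo
  intro k hk
  simp only
  have hk1 := hk.1
  have hk2 := hk.2
  have hk0 : 0 < k := by linarith
  have h3 : 0 < 1 - k^2 := by nlinarith
  have h4 : 0 < k^2 - (1-2*m)^2 := by nlinarith
  rw [← mul_assoc]
  congr 1
  · rw [← ENNReal.ofReal_mul (by positivity)]
    congr 1
    have e1 : 1 - (k^2 - (1-2*m)^2)/(1-(1-2*m)^2) = (1-k^2)/(1-(1-2*m)^2) := by
      field_simp; ring
    rw [e1, sqrt_key (B := (1-k^2)*(k^2-(1-2*m)^2) / k^2)]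
    · rw [Real.sqrt_div (by positivity), Real.sqrt_sq hk0.le, Real.sqrt_mul h3.le]
      rw [one_div_div]
    · positivity
    · positivity
    · positivity
    · field_simp; ring
  · congr 1; field_simp; ring

lemma LK_Y {r : ℝ} (hr0 : 0 < r) :
    LK (1-r) = ∫⁻ y in Set.Ioi (0:ℝ), ENNReal.ofReal (1 / √(4 * (y * (1 + y) * (y + r)))) := by
  rw [LK_P (by linarith)]
  rw [cov_inv (S := Set.Ioi (0:ℝ)) measurableSet_Ioi (fun y => y / (y + r))
    (fun p => r * p / (1 - p)) (fun y => r / (y + r)^2)]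
  · apply setLIntegral_congr_fun measurableSet_Ioi
    intro y hy
    have hy : 0 < y := hy
    have hd : 0 < r / (y + r)^2 := by positivity
    simp only
    rw [abs_of_pos hd, ← ENNReal.ofReal_mul hd.le]
    congr 1
    have e1 : 1 - y / (y + r) = r / (y + r) := by field_simp; ring
    have e2 : 1 - (1 - r) * (y / (y + r)) = r * (1 + y) / (y + r) := by field_simp; ring
    rw [e1, e2]
    apply sqrt_key
    · positivity
    · positivity
    · positivity
    · field_simp
  · intro y hy
    have hy : 0 < y := hy
    exact ⟨by positivity, by rw [div_lt_one (by positivity)]; linarith⟩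
  · rintro p ⟨h1, h2⟩
    have : 0 < 1 - p := by linarith
    exact div_pos (by positivity) this
  · intro y hy
    have hy : 0 < y := hy
    have e1 : 1 - y / (y + r) = r / (y + r) := by field_simp; ring
    simp only [e1]
    field_simp
  · rintro p ⟨h1, h2⟩
    have h3 : 0 < 1 - p := by linarith
    have e1 : r * p / (1 - p) + r = r / (1 - p) := by field_simp; ring
    simp only [e1]
    field_simp
  · intro y hy
    have hy : 0 < y := hy
    have hd : HasDerivAt (fun y : ℝ => y + r) 1 y := (hasDerivAt_id y).add_const r
    refine ((hasDerivAt_id y).div hd (by positivity)).congr_deriv ?_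
    simp only [id]
    field_simp; ring

/-- integrand for the second identity -/
noncomputable def G2 (r T x : ℝ) : ENNReal :=
  ENNReal.ofReal (1 / √(16 * (T * (1 - x) * (1 - r * x) * (x + T) * (r * x + T))))

lemma G2_meas (r : ℝ) : Measurable (Function.uncurry (G2 r)) := by
  simp only [G2, Function.uncurry_def]
  fun_prop

lemma G2_meas' (r : ℝ) : Measurable (fun z : ℝ × ℝ => G2 r z.1 z.2) := G2_meas r

lemma stepY {r x : ℝ} (hr0 : 0 < r) (hr1 : r < 1) (hx0 : 0 < x) (hx1 : x < 1) :
    ENNReal.ofReal (1 / √(4 * (x * (1 - x) * (1 - r * x)))) * LK (1-r)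
      = ∫⁻ T in Set.Ioi (0:ℝ), G2 r T x := by
  have hE : 0 < 1 - r * x := one_sub_pos hr1 hx0.le hx1.le
  have hx2 : 0 < 1 - x := by linarith
  rw [LK_Y hr0, cov_inv (S := Set.Ioi (0:ℝ)) measurableSet_Ioi (fun T => T / x)
    (fun y => y * x) (fun y => 1 / x), ← lintegral_const_mul' _ _ ENNReal.ofReal_ne_top]
  · apply setLIntegral_congr_fun measurableSet_Ioi
    intro T hT
    have hT : 0 < T := hT
    simp only [G2]
    rw [abs_of_pos (by positivity), ← ENNReal.ofReal_mul (by positivity),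
      ← ENNReal.ofReal_mul (by positivity)]
    congr 1
    apply sqrt_key2
    · positivity
    · positivity
    · positivity
    · positivity
    · field_simp; ring
  · intro y hy
    have hy : 0 < y := hy
    exact div_pos hy hx0
  · intro y hy
    have hy : 0 < y := hy
    exact mul_pos hy hx0
  · intro y hy; field_simp
  · intro y hy; field_simp
  · intro y hy
    exact (hasDerivAt_id y).div_const x

lemma stepInv {r U : ℝ} (hr0 : 0 < r) (hr1 : r < 1) (hU0 : 0 < U) (hU1 : U < 1) :
    ENNReal.ofReal (1 / U^2) * ∫⁻ x in Set.Ioo (0:ℝ) 1, G2 r (1/U) x =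
      ∫⁻ z in Set.Ioo (-U) 0, G2 r U z := by
  rw [cov_neg (a := -U) (b := 0) (by linarith) (fun z => -(z / U)) (fun z => 1 / U) (by fun_prop)
    (fun z hz => ((hasDerivAt_id z).div_const U).neg) (fun z hz => by positivity)
    (c := 0) (d := 1) (by field_simp) (by simp), ← lintegral_const_mul' _ _ ENNReal.ofReal_ne_top]
  apply setLIntegral_congr_fun measurableSet_Ioo
  intro z hz
  have hz1 := hz.1
  have hz2 := hz.2
  have h1 : 0 < U + z := by linarith
  have h2 : 0 < 1 - z := by linarith
  have h3 : 0 < U + r * z := by nlinarith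
  have h4 : 0 < 1 - r * z := by nlinarith
  simp only [G2]
  rw [← ENNReal.ofReal_mul (by positivity), ← ENNReal.ofReal_mul (by positivity), ← mul_assoc]
  congr 1
  have e1 : 1 - -(z / U) = (U + z) / U := by field_simp; ring
  have e2 : 1 - r * -(z / U) = (U + r * z) / U := by field_simp; ring
  have e3 : -(z / U) + 1 / U = (1 - z) / U := by field_simp; ring
  have e4 : r * -(z / U) + 1 / U = (1 - r * z) / U := by field_simp; ring
  rw [e1, e2, e3, e4, add_comm z, add_comm (r * z)]
  apply sqrt_key
  · positivity
  · positivity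
  · positivity
  · field_simp

lemma stepMob {r U : ℝ} (hr0 : 0 < r) (hr1 : r < 1) (hU0 : 0 < U) :
    ∫⁻ z in Set.Ioo (-U) 1, G2 r U z =
      ENNReal.ofReal (1 / √(4 * (U * (r + U) * (1 + r * U)))) *
        LK (1 - (1-r)^2*U/((1+r*U)*(r+U))) := by
  have hr2 : 0 < 1 - r := by linarith
  rw [LK_P (by have : 0 < (1-r)^2*U/((1+r*U)*(r+U)) := by positivity
               linarith)]
  have hpos : ∀ x, -U ≤ x → 0 < r * x + U := fun x hx => by nlinarith
  rw [cov_pos (a := -U) (b := 1) (by linarith)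
    (fun x => (x + U) * (r + U) / ((r * x + U) * (1 + U)))
    (fun x => (r + U) * U * (1 - r) / ((1 + U) * (r * x + U)^2))
    (by
      apply ContinuousOn.div (by fun_prop) (by fun_prop)
      intro x hx
      have := hpos x hx.1
      positivity)
    (fun x hx => by
      have := hpos x hx.1.le
      have hn : HasDerivAt (fun x : ℝ => (x + U) * (r + U)) (1 * (r + U)) x :=
        ((hasDerivAt_id x).add_const U).mul_const (r + U)
      have hd : HasDerivAt (fun x : ℝ => (r * x + U) * (1 + U)) (r * 1 * (1 + U)) x :=
        (((hasDerivAt_id x).const_mul r).add_const U).mul_const (1 + U)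
      refine (hn.div hd (by positivity)).congr_deriv ?_
      field_simp; ring)
    (fun x hx => by
      have := hpos x hx.1.le
      positivity)
    (c := 0) (d := 1) (by simp) (by
      rw [div_eq_one_iff_eq (by positivity)]; ring), ← lintegral_const_mul' _ _ ENNReal.ofReal_ne_top]
  apply setLIntegral_congr_fun measurableSet_Ioo
  intro x hx
  have hx1 := hx.1
  have hx2 := hx.2
  have h0 := hpos x hx1.le
  have h1 : 0 < x + U := by linarith
  have h2 : 0 < 1 - x := by linarith
  have h3 : 0 < 1 - r * x := by nlinarith
  simp only [G2]
  rw [← ENNReal.ofReal_mul (by positivity), ← ENNReal.ofReal_mul (by positivity)]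
  congr 1
  have e1 : 1 - (x + U) * (r + U) / ((r * x + U) * (1 + U)) =
      U * (1 - r) * (1 - x) / ((r * x + U) * (1 + U)) := by
    have hne : (r * x + U) * (1 + U) ≠ 0 := by positivity
    rw [eq_div_iff hne, sub_mul, div_mul_cancel₀ _ hne]; ring
  have e2 : 1 - (1 - (1-r)^2*U/((1+r*U)*(r+U))) * ((x + U) * (r + U) / ((r * x + U) * (1 + U))) =
      U * (1 - r) * (1 - r * x) / ((1 + r * U) * (r * x + U)) := by field_simp; ring
  rw [e1, e2]
  symm
  apply sqrt_key2
  · positivity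
  · positivity
  · positivity
  · positivity
  · field_simp; norm_num

lemma ident2 {r : ℝ} (hr0 : 0 < r) (hr1 : r < 1) :
    LK r * LK (1-r) = ∫⁻ U in Set.Ioo (0:ℝ) 1,
      ENNReal.ofReal (1 / √(4 * (U * (r + U) * (1 + r * U)))) *
        LK (1 - (1-r)^2*U/((1+r*U)*(r+U))) := by
  have hH : Measurable (fun T => ∫⁻ x in Set.Ioo (0:ℝ) 1, G2 r T x) :=
    (G2_meas' r).lintegral_prod_right'
  calc LK r * LK (1-r) = ∫⁻ x in Set.Ioo (0:ℝ) 1, ∫⁻ T in Set.Ioi (0:ℝ), G2 r T x := by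
        rw [LK_P hr1, ← lintegral_mul_const _ (by fun_prop)]
        apply setLIntegral_congr_fun measurableSet_Ioo
        intro x hx
        exact stepY hr0 hr1 hx.1 hx.2
    _ = ∫⁻ T in Set.Ioi (0:ℝ), ∫⁻ x in Set.Ioo (0:ℝ) 1, G2 r T x := by
        have hs : Measurable (Function.uncurry (fun x T : ℝ => G2 r T x)) := by
          simp only [G2, Function.uncurry_def]
          fun_prop
        exact lintegral_lintegral_swap (f := fun x T : ℝ => G2 r T x) hs.aemeasurable
    _ = (∫⁻ T in Set.Ioo (0:ℝ) 1, ∫⁻ x in Set.Ioo (0:ℝ) 1, G2 r T x) +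
        ∫⁻ T in Set.Ioi (1:ℝ), ∫⁻ x in Set.Ioo (0:ℝ) 1, G2 r T x := by
        rw [← Set.Ioc_union_Ioi_eq_Ioi (zero_le_one' ℝ), lintegral_union measurableSet_Ioi
          (Set.Ioc_disjoint_Ioi le_rfl), setLIntegral_congr Ioo_ae_eq_Ioc]
    _ = (∫⁻ T in Set.Ioo (0:ℝ) 1, ∫⁻ x in Set.Ioo (0:ℝ) 1, G2 r T x) +
        ∫⁻ U in Set.Ioo (0:ℝ) 1, ∫⁻ z in Set.Ioo (-U) 0, G2 r U z := by
        congr 1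
        rw [cov_inv (S := Set.Ioo (0:ℝ) 1) measurableSet_Ioo (fun U => 1 / U) (fun U => 1 / U)
          (fun U => -(1 / U^2))]
        · apply setLIntegral_congr_fun measurableSet_Ioo
          intro U hU
          have := hU.1
          simp only
          rw [abs_neg, abs_of_pos (by positivity), stepInv hr0 hr1 hU.1 hU.2]
        · rintro U ⟨h1, h2⟩
          exact (one_lt_one_div h1 h2)
        · intro U hU
          have hU : 1 < U := hU
          have : 0 < U := by linarith
          exact ⟨by positivity, by rw [div_lt_one this]; exact hU⟩
        · intro U hU; simp
        · intro U hU; simp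
        · rintro U ⟨h1, h2⟩
          simpa using hasDerivAt_inv h1.ne'
    _ = ∫⁻ U in Set.Ioo (0:ℝ) 1, ∫⁻ z in Set.Ioo (-U) 1, G2 r U z := by
        rw [← lintegral_add_left hH]
        apply setLIntegral_congr_fun measurableSet_Ioo
        intro U hU
        have := hU.1
        simp only
        rw [add_comm, setLIntegral_congr (Ioo_ae_eq_Ioc (a := -U) (b := 0)),
          ← lintegral_union measurableSet_Ioo,
          Set.Ioc_union_Ioo_eq_Ioo (by linarith) (by norm_num)]
        rw [Set.disjoint_left]
        intro x hx hx'
        linarith [hx.2, hx'.1]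
    _ = _ := by
        apply setLIntegral_congr_fun measurableSet_Ioo
        intro U hU
        exact stepMob hr0 hr1 hU.1

lemma ident2' {r : ℝ} (hr0 : 0 < r) (hr1 : r < 1) :
    LK r * LK (1-r) = ∫⁻ k in Set.Ioo (4*r/(1+r)^2) 1,
      ENNReal.ofReal (1 / √(4 * ((1+r)^2 * (k * (1-k) * (k - 4*r/(1+r)^2))))) * LK k := by
  have hr2 : 0 < 1 - r := by linarith
  rw [ident2 hr0 hr1, cov_neg (a := 0) (b := 1) (c := 4*r/(1+r)^2) (d := 1) (by norm_num)
    (fun U => 1 - (1-r)^2*U/((1+r*U)*(r+U)))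
    (fun U => (1-r)^2*r*(1-U^2)/((1+r*U)*(r+U))^2) ?_ ?_ ?_ ?_ ?_
    (fun k => ENNReal.ofReal (1 / √(4 * ((1+r)^2 * (k * (1-k) * (k - 4*r/(1+r)^2))))) * LK k)]
  · apply setLIntegral_congr_fun measurableSet_Ioo
    intro U hU
    have h0 := hU.1
    have h1 := hU.2
    have h2 : 0 < 1 - U := by linarith
    have h3 : 0 < 1 - U^2 := by nlinarith
    simp only
    rw [← mul_assoc (ENNReal.ofReal _), ← ENNReal.ofReal_mul (by positivity)]
    congr 2
    have e1 : 1 - (1-r)^2*U/((1+r*U)*(r+U)) = r*(1+U)^2/((1+r*U)*(r+U)) := by field_simp; ring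
    have e2 : 1 - r*(1+U)^2/((1+r*U)*(r+U)) = (1-r)^2*U/((1+r*U)*(r+U)) := by field_simp; ring
    have e3 : r*(1+U)^2/((1+r*U)*(r+U)) - 4*r/(1+r)^2 =
      r*(1-r)^2*(1-U)^2/((1+r)^2*((1+r*U)*(r+U))) := by field_simp; ring
    rw [e1, e2, e3]
    symm
    apply sqrt_key
    · positivity
    · positivity
    · positivity
    · field_simp; ring
  · apply ContinuousOn.sub (by fun_prop)
    apply ContinuousOn.div (by fun_prop) (by fun_prop)
    intro x hx
    have := hx.1
    positivity
  · intro U hU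
    have h0 := hU.1
    have hn : HasDerivAt (fun U : ℝ => (1-r)^2*U) ((1-r)^2*1) U :=
      (hasDerivAt_id U).const_mul _
    have hd1 : HasDerivAt (fun U : ℝ => 1+r*U) (r*1) U :=
      ((hasDerivAt_id U).const_mul r).const_add 1
    have hd2 : HasDerivAt (fun U : ℝ => r+U) 1 U := (hasDerivAt_id U).const_add r
    have hd := hd1.mul hd2
    refine ((hn.div hd (by simp only [Pi.mul_apply]; positivity)).const_sub 1).congr_deriv ?_
    simp only [Pi.mul_apply]
    field_simp; ring
  · intro U hU
    have h0 := hU.1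
    have h1 := hU.2
    have h3 : 0 < 1 - U^2 := by nlinarith
    positivity
  · simp
  · field_simp; ring

lemma ident2'' {lam : ℝ} (h0 : 0 < lam) (h1 : lam < 1) :
    LK lam * LK (1-lam) = ∫⁻ k in Set.Ioo ((1-lam)/(1+lam)) 1,
      ENNReal.ofReal (1 / (√(1-k^2) * √((1+lam)^2*k^2-(1-lam)^2))) * LK (k^2) := by
  obtain ⟨l, hl0, hl⟩ : ∃ l : ℝ, 0 < l ∧ lam = l^2 :=
    ⟨√lam, Real.sqrt_pos.2 h0, (Real.sq_sqrt h0.le).symm⟩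
  subst hl
  have hl1 : l < 1 := by nlinarith
  have hl2 : 0 < 1 - l := by linarith
  have hl3 : 0 < 1 - l^2 := by linarith
  set m := (1-l)/(1+l) with hm
  have hm0 : 0 < m := by positivity
  have hm1 : m < 1 := by rw [hm, div_lt_one (by positivity)]; linarith
  have hr1 : m^2 < 1 := by nlinarith
  have L1 := LK_landen hl0 hl1
  have L2 := LK_landen hm0 hm1
  rw [show 4*l/(1+l)^2 = 1 - m^2 by rw [hm]; field_simp; ring] at L1
  rw [show 4*m/(1+m)^2 = 1 - l^2 by rw [hm]; field_simp; ring] at L2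
  have hk0 : 4*m^2/(1+m^2)^2 = ((1-l^2)/(1+l^2))^2 := by rw [hm]; field_simp; ring
  have hI := ident2' (sq_pos_of_pos hm0) hr1
  rw [hk0] at hI
  have hc0 : 0 < (1-l^2)/(1+l^2) := by positivity
  have hc1 : (1-l^2)/(1+l^2) < 1 := by rw [div_lt_one (by positivity)]; nlinarith
  rw [cov_pos (a := (1-l^2)/(1+l^2)) (b := 1) hc1 (fun k => k^2) (fun k => 2*k) (by fun_prop)
    (fun k _ => by simpa using hasDerivAt_pow 2 k)
    (fun k hk => by have : 0 < k := hc0.trans hk.1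
                    positivity) rfl (by simp)] at hI
  have hprod : LK (l^2) * LK (1-l^2) = ENNReal.ofReal ((1+m)/(1+l)) * (LK (m^2) * LK (1-m^2)) := by
    rw [L1, L2, show (1+m)/(1+l) = (1+l)⁻¹ * (1+m) by ring, ENNReal.ofReal_mul (by positivity)]
    have : ENNReal.ofReal (1+l)⁻¹ * ENNReal.ofReal (1+l) = 1 := by
      rw [← ENNReal.ofReal_mul (by positivity), inv_mul_cancel₀ (by positivity), ENNReal.ofReal_one]
    calc _ = 1 * (LK (l^2) * (ENNReal.ofReal (1+m) * LK (m^2))) := by ring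
      _ = _ := by rw [← this]; ring
  rw [hprod, hI, ← lintegral_const_mul' _ _ ENNReal.ofReal_ne_top]
  apply setLIntegral_congr_fun measurableSet_Ioo
  intro k hk
  have hk1 := hk.1
  have hk2 := hk.2
  have hkp : 0 < k := hc0.trans hk1
  have h3 : 0 < 1 - k^2 := by nlinarith
  have h4 : 0 < k^2 - ((1-l^2)/(1+l^2))^2 := by nlinarith
  simp only
  rw [← mul_assoc, ← mul_assoc, ← ENNReal.ofReal_mul (by positivity), ← ENNReal.ofReal_mul (by positivity)]
  congr 2
  have e1 : (1+l^2)^2*k^2-(1-l^2)^2 = (1+l^2)^2 * (k^2 - ((1-l^2)/(1+l^2))^2) := by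
    field_simp
  rw [e1, ← Real.sqrt_mul h3.le, mul_assoc]
  generalize k^2 - ((1-l^2)/(1+l^2))^2 = Z at *
  rw [← mul_assoc]
  apply sqrt_key
  · positivity
  · positivity
  · positivity
  · have : (1+m)/(1+l)*(1+l^2) = 1+m^2 := by rw [hm]; field_simp; ring
    have : ((1+m)/(1+l))^2*(1+l^2)^2 = (1+m^2)^2 := by rw [← this]; ring
    linear_combination (4*k^2*(1-k^2)*Z) * this

lemma to_interval {a : ℝ} (ha0 : 0 ≤ a) (ha1 : a < 1) (w : ℝ → ℝ) (hw : ∀ k ∈ Set.Ioo a 1, 0 ≤ w k)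
    (hwm : Measurable w) :
    ∫ k in a..1, w k * ellipticK k =
      (∫⁻ k in Set.Ioo a 1, ENNReal.ofReal (w k) * LK (k^2)).toReal := by
  rw [intervalIntegral.integral_of_le ha1.le, integral_Ioc_eq_integral_Ioo,
    integral_eq_lintegral_of_nonneg_ae]
  · congr 1
    apply setLIntegral_congr_fun measurableSet_Ioo
    intro k hk
    simp only
    rw [ENNReal.ofReal_mul (hw k hk), LK_ofReal (ha0.trans hk.1.le) hk.2]
  · filter_upwards [ae_restrict_mem measurableSet_Ioo] with k hk
    exact mul_nonneg (hw k hk) (ellipticK_nonneg k)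
  · exact (hwm.mul ellipticK_meas).aestronglyMeasurable

theorem stmt_14 (lam : ℝ) (h0 : 0 < lam) (h1 : lam ≤ 1/2) :
    (∫ k in (1-2*lam)..1,
        k * ellipticK k / (Real.sqrt (1-k^2) * Real.sqrt (k^2 - (1-2*lam)^2)))
      = ellipticK (Real.sqrt lam) * ellipticK (Real.sqrt (1-lam)) ∧
    ellipticK (Real.sqrt lam) * ellipticK (Real.sqrt (1-lam))
      = ∫ k in ((1-lam)/(1+lam))..1,
          ellipticK k / (Real.sqrt (1-k^2) * Real.sqrt ((1+lam)^2*k^2 - (1-lam)^2)) := by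
  have hprod : ellipticK (√lam) * ellipticK (√(1-lam)) = (LK lam * LK (1-lam)).toReal := by
    have a1 := LK_ofReal (Real.sqrt_nonneg lam) (by rw [Real.sqrt_lt' one_pos]; linarith)
    have a2 := LK_ofReal (Real.sqrt_nonneg (1-lam)) (by rw [Real.sqrt_lt' one_pos]; linarith)
    rw [Real.sq_sqrt h0.le] at a1
    rw [Real.sq_sqrt (by linarith)] at a2
    rw [← a1, ← a2, ENNReal.toReal_mul, ENNReal.toReal_ofReal (ellipticK_nonneg _),
      ENNReal.toReal_ofReal (ellipticK_nonneg _)]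
  constructor
  · rw [hprod, ident1' h0 h1, ← to_interval (by linarith) (by linarith)]
    · congr 1; funext k; ring
    · intro k hk
      have : 0 ≤ k := by linarith [hk.1]
      positivity
    · fun_prop
  · rw [hprod, ident2'' h0 (by linarith), ← to_interval]
    · congr 1; funext k; ring
    · exact div_nonneg (by linarith) (by linarith)
    · rw [div_lt_one (by linarith)]; linarith
    · intro k hk
      positivity
    · fun_prop
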